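/- Let d ≥ 2, k ≥ 2, 1 ≤ t ≤ k, let ψ ∈ ℂ^d be a unit vector with projector P = |ψ⟩⟨ψ|, let Ω = P + λ(I − P) with λ ∈ [0,1), and let 0 ≤ ε ≤ (d−1)/d with q = dε/(d−1). For the globally white-noisy ensemble state η = (1−q)(|ψ⟩⟨ψ|)^{⊗k} + q·I/d^k on (ℂ^d)^{⊗k}, with S_k the cyclic-shift unitary and D_k = (I + S_k)/2, the passing probability satisfies tr[(Ω^{⊗t} ⊗ I^{⊗(k−t)}) · D_k η D_k†] = 1 − q + (q/2)[(λ + (1−λ)/d)^t + ((d−1)λ^t + 1)/d^k]. -/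

import Mathlib

open Matrix Kronecker BigOperators

noncomputable section

/-- The cyclically previous index: `m - 1 (mod k)`. -/
def prevIdx {k : ℕ} (m : Fin k) : Fin k :=
  ⟨(m.val + (k - 1)) % k, Nat.mod_lt _ m.pos⟩

/-- The cyclic-shift unitary `S_k` on `(ℂ^d)^{⊗k}`, determined by
`S_k (v_1 ⊗ ⋯ ⊗ v_k) = v_k ⊗ v_1 ⊗ ⋯ ⊗ v_{k-1}`, written as a matrix in the
standard tensor-product basis indexed by functions `Fin k → Fin d`. -/
def cyc (d k : ℕ) : Matrix (Fin k → Fin d) (Fin k → Fin d) ℂ :=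
  fun g f => if g = fun m => f (prevIdx m) then 1 else 0

/-- The SWAP projection `D_k = (I + S_k)/2`. -/
def Dk (d k : ℕ) : Matrix (Fin k → Fin d) (Fin k → Fin d) ℂ :=
  (1 / 2 : ℂ) • (1 + cyc d k)

/-- The tensor product `A_1 ⊗ A_2 ⊗ ⋯ ⊗ A_k` of `d × d` matrices, acting
factor-wise on `(ℂ^d)^{⊗k}`. -/
def tensOp {d k : ℕ} (A : Fin k → Matrix (Fin d) (Fin d) ℂ) :
    Matrix (Fin k → Fin d) (Fin k → Fin d) ℂ :=
  fun g f => ∏ m, A m (g m) (f m)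

/-- The tensor product `v_1 ⊗ ⋯ ⊗ v_k` of vectors in `ℂ^d`. -/
def tensVec {d k : ℕ} (v : Fin k → (Fin d → ℂ)) : (Fin k → Fin d) → ℂ :=
  fun f => ∏ m, v m (f m)

/-- The partial trace over the last `k - 1` tensor factors, mapping matrices on
`(ℂ^d)^{⊗k}` to `d × d` matrices by tracing out factors `2` through `k`. -/
def ptraceFirst {d k : ℕ} (M : Matrix (Fin k → Fin d) (Fin k → Fin d) ℂ) :
    Matrix (Fin d) (Fin d) ℂ :=
  fun a b => ∑ r : {i : Fin k // i.val ≠ 0} → Fin d,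
    M (fun m => if h : m.val = 0 then a else r ⟨m, h⟩)
      (fun m => if h : m.val = 0 then b else r ⟨m, h⟩)
theorem aux_trace_tens {d k : ℕ} (A : Fin k → Matrix (Fin d) (Fin d) ℂ) :
    (tensOp A).trace = ∏ m, (A m).trace := by
  simp only [Matrix.trace, Matrix.diag, tensOp]
  rw [Finset.prod_univ_sum]; simp

theorem aux_mul_tens {d k : ℕ} (A B : Fin k → Matrix (Fin d) (Fin d) ℂ) :
    tensOp A * tensOp B = tensOp (fun m => A m * B m) := by
  ext g f
  simp only [Matrix.mul_apply, tensOp]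
  rw [Finset.prod_univ_sum]; simp [Finset.prod_mul_distrib]

def auxQ {d : ℕ} (B : ℕ → Matrix (Fin d) (Fin d) ℂ) : ℕ → Matrix (Fin d) (Fin d) ℂ
  | 0 => 1
  | n + 1 => B n * auxQ B n

theorem aux_path {d : ℕ} (B : ℕ → Matrix (Fin d) (Fin d) ℂ) (n : ℕ) :
    ∀ F : Matrix (Fin d) (Fin d) ℂ,
    ∑ g : Fin (n + 1) → Fin d, F (g 0) (g (Fin.last n)) *
      ∏ i : Fin n, B i (g i.succ) (g i.castSucc) = (F * auxQ B n).trace := by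
  induction n with
  | zero =>
    intro F
    simp only [auxQ, Finset.univ_eq_empty, Finset.prod_empty, mul_one, Matrix.trace, Matrix.diag]
    rw [← (Equiv.funUnique (Fin 1) (Fin d)).sum_comp]
    rfl
  | succ n ih =>
    intro F
    rw [auxQ, ← mul_assoc, ← ih, ← (Fin.snocEquiv (fun _ => Fin d)).sum_comp,
      Fintype.sum_prod_type_right]
    refine Finset.sum_congr rfl fun g _ => ?_
    simp only [Fin.prod_univ_castSucc, Matrix.mul_apply, Finset.sum_mul]
    refine Finset.sum_congr rfl fun b _ => ?_
    have h0 : (0 : Fin (n+2)) = Fin.castSucc (0 : Fin (n+1)) := rfl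
    simp only [Fin.snocEquiv, Equiv.coe_fn_mk, h0, Fin.snoc_castSucc, Fin.snoc_last, Fin.succ_last,
      Fin.succ_castSucc, Fin.val_castSucc, Fin.val_last]
    ring

theorem aux_Q {d : ℕ} (W : Matrix (Fin d) (Fin d) ℂ) (t n : ℕ) (ht : 1 ≤ t) :
    auxQ (fun i => if i + 1 < t then W else 1) n = W ^ (min n (t - 1)) := by
  induction n with
  | zero => simp [auxQ]
  | succ n ih =>
    rw [auxQ, ih]
    split_ifs with h
    · rw [min_eq_left (by omega), min_eq_left (by omega), pow_succ']
    · rw [min_eq_right (by omega), min_eq_right (by omega), one_mul]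

theorem aux_prev_zero (n : ℕ) : prevIdx (0 : Fin (n + 1)) = Fin.last n := by
  ext; simp [prevIdx]

theorem aux_prev_succ {n : ℕ} (i : Fin n) : prevIdx i.succ = i.castSucc := by
  ext
  have : (i : ℕ) + 1 + (n + 1 - 1) = i + (n + 1) := by omega
  simp only [prevIdx, Fin.val_succ, this, Nat.add_mod_right, Fin.val_castSucc]
  exact Nat.mod_eq_of_lt (by omega)

theorem aux_prev_bij (k : ℕ) : Function.Bijective (prevIdx : Fin k → Fin k) := by
  rw [← Finite.injective_iff_bijective]
  intro a b h
  cases k with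
  | zero => exact a.elim0
  | succ n =>
    induction a using Fin.cases with
    | zero =>
      induction b using Fin.cases with
      | zero => rfl
      | succ j =>
        rw [aux_prev_zero, aux_prev_succ] at h
        exact absurd h (Fin.castSucc_lt_last j).ne'
    | succ i =>
      induction b using Fin.cases with
      | zero =>
        rw [aux_prev_zero, aux_prev_succ] at h
        exact absurd h (Fin.castSucc_lt_last i).ne
      | succ j =>
        rw [aux_prev_succ, aux_prev_succ] at h
        rw [Fin.castSucc_injective _ h]

theorem aux_tr_cyc {d k t : ℕ} (W : Matrix (Fin d) (Fin d) ℂ) (ht : 1 ≤ t) (hk : t ≤ k) :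
    (tensOp (fun m : Fin k => if m.val < t then W else 1) * cyc d k).trace = (W ^ t).trace := by
  obtain ⟨n, rfl⟩ : ∃ n, k = n + 1 := ⟨k - 1, by omega⟩
  have h := aux_path (fun i => if i + 1 < t then W else 1) n W
  rw [aux_Q W t n ht, min_eq_right (by omega), ← pow_succ', Nat.sub_add_cancel ht] at h
  rw [← h, Matrix.trace]
  refine Finset.sum_congr rfl fun g _ => ?_
  simp only [Matrix.diag, Matrix.mul_apply, cyc, mul_ite, mul_one, mul_zero, Finset.sum_ite_eq',
    Finset.mem_univ, if_true, tensOp, Finset.sum_ite_eq]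
  rw [Fin.prod_univ_succ, aux_prev_zero]
  simp only [aux_prev_succ]
  simp [show 0 < t from ht]

theorem aux_tens_transpose {d k : ℕ} (A : Fin k → Matrix (Fin d) (Fin d) ℂ) :
    (tensOp A)ᵀ = tensOp (fun m => (A m)ᵀ) := rfl

theorem aux_cycH (d k : ℕ) : (cyc d k)ᴴ = (cyc d k)ᵀ := by
  ext g f
  simp only [Matrix.conjTranspose_apply, Matrix.transpose_apply, cyc]
  split_ifs <;> simp

theorem aux_tr_cycH {d k t : ℕ} (W : Matrix (Fin d) (Fin d) ℂ) (ht : 1 ≤ t) (hk : t ≤ k) :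
    (tensOp (fun m : Fin k => if m.val < t then W else 1) * (cyc d k)ᴴ).trace = (W ^ t).trace := by
  rw [aux_cycH, ← Matrix.trace_transpose, Matrix.transpose_mul, Matrix.transpose_transpose,
    Matrix.trace_mul_comm, aux_tens_transpose]
  have := aux_tr_cyc (d := d) Wᵀ ht hk
  rw [← Matrix.transpose_pow, Matrix.trace_transpose] at this
  rw [← this]
  congr 3
  funext m
  split_ifs <;> simp

theorem aux_cyc_apply {d k : ℕ} (σ : Equiv.Perm (Fin k)) (hσ : ∀ m, σ m = prevIdx m)
    (g f : Fin k → Fin d) : cyc d k g f = if f = g ∘ σ.symm then 1 else 0 := by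
  simp only [cyc]
  congr 1
  simp only [← hσ, eq_iff_iff]
  constructor
  · rintro rfl; ext m; simp
  · rintro rfl; ext m; simp

theorem aux_perm (k : ℕ) : ∃ σ : Equiv.Perm (Fin k), ∀ m, σ m = prevIdx m :=
  ⟨Equiv.ofBijective _ (aux_prev_bij k), fun _ => rfl⟩

theorem aux_cyc_unitary (d k : ℕ) : cyc d k * (cyc d k)ᴴ = 1 := by
  obtain ⟨σ, hσ⟩ := aux_perm k
  ext g f
  rw [aux_cycH, Matrix.mul_apply]
  simp only [Matrix.transpose_apply, aux_cyc_apply σ hσ, Matrix.one_apply]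
  simp only [ite_mul, one_mul, zero_mul, Finset.sum_ite_eq', Finset.mem_univ, if_true]
  congr 1
  simp only [eq_iff_iff]
  exact ⟨fun h => σ.symm.surjective.injective_comp_right h, fun h => by rw [h]⟩

theorem aux_cyc_P {d k : ℕ} (ψ : Fin d → ℂ) :
    cyc d k * tensOp (fun _ : Fin k => vecMulVec ψ (star ψ)) =
      tensOp (fun _ : Fin k => vecMulVec ψ (star ψ)) := by
  obtain ⟨σ, hσ⟩ := aux_perm k
  ext g f
  rw [Matrix.mul_apply]
  simp only [aux_cyc_apply σ hσ, ite_mul, one_mul, zero_mul, Finset.sum_ite_eq', Finset.sum_ite_eq,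
    Finset.mem_univ, if_true, tensOp, vecMulVec_apply, Finset.prod_mul_distrib, Function.comp]
  congr 1
  exact Equiv.prod_comp σ.symm (fun m => ψ (g m))

theorem aux_P_herm {d k : ℕ} (ψ : Fin d → ℂ) :
    (tensOp (fun _ : Fin k => vecMulVec ψ (star ψ)))ᴴ =
      tensOp (fun _ : Fin k => vecMulVec ψ (star ψ)) := by
  ext g f
  simp [tensOp, vecMulVec_apply, Matrix.conjTranspose_apply, mul_comm]

theorem aux_pow {d : ℕ} (P : Matrix (Fin d) (Fin d) ℂ) (hP : P * P = P) (c : ℂ) (t : ℕ) :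
    (P + c • (1 - P)) ^ t = P + c ^ t • (1 - P) := by
  induction t with
  | zero => simp
  | succ n ih =>
    rw [pow_succ, ih]
    simp only [add_mul, mul_add, smul_mul_assoc, mul_smul_comm, sub_mul, mul_sub, hP, one_mul,
      mul_one, sub_self, smul_zero, add_zero, pow_succ]
    module

/-- for the globally white-noisy ensemble state
`η = (1−q)(|ψ⟩⟨ψ|)^{⊗k} + q·I/d^k` with `q = dε/(d−1)`, the passing probability is
`tr[(Ω^{⊗t} ⊗ I^{⊗(k−t)}) · D_k η D_k†]
  = 1 − q + (q/2)[(λ + (1−λ)/d)^t + ((d−1)λ^t + 1)/d^k]`. -/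
theorem stmt12 (d k t : ℕ) (hd : 2 ≤ d) (hk : 2 ≤ k) (ht1 : 1 ≤ t) (ht2 : t ≤ k)
    (ψ : Fin d → ℂ) (hψ : star ψ ⬝ᵥ ψ = 1)
    (lam ε q : ℝ) (hlam0 : 0 ≤ lam) (hlam1 : lam < 1)
    (hε0 : 0 ≤ ε) (hε1 : ε ≤ ((d : ℝ) - 1) / (d : ℝ))
    (hq : q = (d : ℝ) * ε / ((d : ℝ) - 1))
    (P Ω : Matrix (Fin d) (Fin d) ℂ)
    (hP : P = vecMulVec ψ (star ψ))
    (hΩ : Ω = P + (lam : ℂ) • (1 - P))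
    (η : Matrix (Fin k → Fin d) (Fin k → Fin d) ℂ)
    (hη : η = ((1 - q : ℝ) : ℂ) • tensOp (fun _ : Fin k => P)
        + ((q : ℝ) : ℂ) • ((d : ℂ) ^ k)⁻¹ • (1 : Matrix (Fin k → Fin d) (Fin k → Fin d) ℂ)) :
    (tensOp (fun m : Fin k => if m.val < t then Ω else 1)
        * (Dk d k * η * (Dk d k)ᴴ)).trace
      = ((1 - q + q / 2 * ((lam + (1 - lam) / (d : ℝ)) ^ t
          + (((d : ℝ) - 1) * lam ^ t + 1) / (d : ℝ) ^ k) : ℝ) : ℂ) := by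
  have hPP : P * P = P := by
    rw [hP, vecMulVec_mul_vecMulVec, hψ, one_smul]
  have hPt : P.trace = 1 := by
    rw [hP, Matrix.trace_vecMulVec, dotProduct_comm, hψ]
  have hd0 : (d : ℂ) ≠ 0 := by
    have : d ≠ 0 := by omega
    exact_mod_cast this
  have hT1 : cyc d k * tensOp (fun _ : Fin k => P) = tensOp (fun _ : Fin k => P) := by
    rw [hP]; exact aux_cyc_P ψ
  have hT2 : tensOp (fun _ : Fin k => P) * (cyc d k)ᴴ = tensOp (fun _ : Fin k => P) := by
    have := congrArg Matrix.conjTranspose hT1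
    rw [Matrix.conjTranspose_mul] at this
    rw [hP] at this ⊢
    rwa [aux_P_herm] at this
  have hDh : (Dk d k)ᴴ = (1 / 2 : ℂ) • (1 + (cyc d k)ᴴ) := by
    simp [Dk, Matrix.conjTranspose_smul]
  have hDP : Dk d k * tensOp (fun _ : Fin k => P) * (Dk d k)ᴴ = tensOp (fun _ : Fin k => P) := by
    rw [hDh, Dk, smul_mul_assoc, add_mul, one_mul, hT1, ← two_smul ℂ, smul_smul]
    rw [mul_smul_comm, mul_add, mul_one, smul_mul_assoc, hT2]
    module
  have hDD : Dk d k * (Dk d k)ᴴ = (1 / 4 : ℂ) • ((2 : ℂ) • 1 + cyc d k + (cyc d k)ᴴ) := by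
    rw [hDh, Dk, smul_mul_assoc, mul_smul_comm, smul_smul, add_mul, one_mul, mul_add, mul_one,
      aux_cyc_unitary]
    module
  have hΩP : Ω * P = P := by
    rw [hΩ, add_mul, smul_mul_assoc, sub_mul, hPP, one_mul, sub_self, smul_zero, add_zero]
  have h1 : (tensOp (fun m : Fin k => if m.val < t then Ω else 1)
      * tensOp (fun _ : Fin k => P)).trace = 1 := by
    rw [aux_mul_tens, aux_trace_tens]
    refine Finset.prod_eq_one fun m _ => ?_
    split_ifs
    · rw [hΩP, hPt]
    · rw [one_mul, hPt]
  have hΩt : ∀ s : ℕ, (Ω ^ s).trace = 1 + lam ^ s * (d - 1) := by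
    intro s
    rw [hΩ, aux_pow P hPP, Matrix.trace_add, Matrix.trace_smul, Matrix.trace_sub, hPt]
    simp
  have h2 : (tensOp (fun m : Fin k => if m.val < t then Ω else 1)).trace
      = (1 + lam * (d - 1)) ^ t * (d : ℂ) ^ (k - t) := by
    have := hΩt 1
    rw [pow_one, pow_one] at this
    rw [aux_trace_tens, ← this]
    rw [Fin.prod_univ_eq_prod_range
      (fun i => (if i < t then Ω else (1 : Matrix (Fin d) (Fin d) ℂ)).trace) k]
    obtain ⟨s, rfl⟩ := Nat.exists_eq_add_of_le ht2
    rw [Finset.prod_range_add]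
    congr 1
    · rw [Finset.prod_congr rfl (g := fun _ => Ω.trace)]
      · simp
      · intro i hi
        rw [if_pos (Finset.mem_range.1 hi)]
    · simp
  have h3 := aux_tr_cyc (d := d) Ω ht1 ht2
  have h4 := aux_tr_cycH (d := d) Ω ht1 ht2
  rw [hΩt] at h3 h4
  have hsplit : Dk d k * η * (Dk d k)ᴴ = ((1 - q : ℝ) : ℂ) • tensOp (fun _ : Fin k => P)
      + ((q : ℝ) : ℂ) • ((d : ℂ) ^ k)⁻¹ • ((1 / 4 : ℂ) • ((2 : ℂ) • 1 + cyc d k + (cyc d k)ᴴ)) := by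
    rw [hη, mul_add, add_mul, mul_smul_comm, smul_mul_assoc, hDP, ← hDD]
    simp only [mul_smul_comm, smul_mul_assoc, mul_one]
  rw [hsplit]
  simp only [mul_add, mul_smul_comm, Matrix.trace_add, Matrix.trace_smul, mul_one, h1, h2, h3, h4,
    smul_eq_mul]
  push_cast
  obtain ⟨s, rfl⟩ := Nat.exists_eq_add_of_le ht2
  have h5 : (lam + (1 - lam) / d : ℂ) ^ t = (1 + lam * (d - 1)) ^ t / (d : ℂ) ^ t := by
    rw [← div_pow]
    congr 1
    field_simp
    ring
  rw [h5, Nat.add_sub_cancel_left, pow_add]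
  field_simp
  ring
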